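/- There is no 13×9 matrix M with integer entries such that MᵀM = G₂, where G₂ is the 9×9 integer matrix [[3,-1,-1,-1,0,0,0,0,0],[-1,3,0,0,-1,-1,0,0,0],[-1,0,3,0,0,-1,-1,0,0],[-1,0,0,5,0,-2,-1,-1,0],[0,-1,0,0,2,0,0,0,-1],[0,-1,-1,-2,0,6,0,-1,0],[0,0,-1,-1,0,0,2,0,0],[0,0,0,-1,0,-1,0,3,0],[0,0,0,0,-1,0,0,0,2]]. (Equivalently, since any factorization with fewer rows can be padded with zero rows, there is no integer matrix M with at most 13 rows and 9 columns satisfying MᵀM = G₂.) -/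

import Mathlib

open Matrix

def G₂ : Matrix (Fin 9) (Fin 9) ℤ :=
  !![3,-1,-1,-1,0,0,0,0,0;
     -1,3,0,0,-1,-1,0,0,0;
     -1,0,3,0,0,-1,-1,0,0;
     -1,0,0,5,0,-2,-1,-1,0;
     0,-1,0,0,2,0,0,0,-1;
     0,-1,-1,-2,0,6,0,-1,0;
     0,0,-1,-1,0,0,2,0,0;
     0,0,0,-1,0,-1,0,3,0;
     0,0,0,0,-1,0,0,0,2]

/-!
The equation `Mᵀ * M = G₂` says that the sum of `rᵀ r` over the rows `r` of `M` is `G₂`, so it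
is unaffected by permuting the rows and by changing their signs. Hence the rows may be assumed
to be lexicographically decreasing, and each of them to be lexicographically at least its negative.

Under this normalization the columns are determined one at a time by a very small search.
Given the first `k` columns, the entries of the next one are chosen from top to bottom. They are at
most `2` in absolute value, since the diagonal of `G₂` is at most `6`; two consecutive rows that
agree so far must continue with decreasing entries; a row that vanishes so far must continue with
a nonnegative entry. A partially chosen column is discarded as soon as the part still to be chosen
would violate the Cauchy–Schwarz inequality against an earlier column. With the columns taken in
the order `colOrder`, never more than 23 partial matrices are alive at one stage, and none of
them extends to all nine columns.

`mem_columns` and `search_eq_false` show that the search finds every normalized factorization,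
`exists_normalized` provides the normalization, and the search itself is evaluated by the kernel.
-/

namespace Goeritz

/-! ### The search -/

/-- The Cauchy–Schwarz test for the rest of a column: `left` is its squared norm, and an entry
`(d, r)` of `cs` records, for an earlier column, the inner product `d` of the two remaining parts
and the squared norm `r` of the remaining part of that earlier column. -/
def feasible (left : ℤ) (cs : List (ℤ × ℤ)) : Bool :=
  cs.all fun c => decide (c.1 * c.1 ≤ left * c.2)

/-- Whether `x` may follow the row prefix `p` in a normalized matrix, when the row above has prefix
`prev.1` followed by `prev.2` and the squared norm of the rest of the column is `left`. -/
def admissible (p : List ℤ) (prev : List ℤ × ℤ) (left x : ℤ) : Bool :=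
  decide (x * x ≤ left) && (!decide (p = prev.1) || decide (x ≤ prev.2)) &&
    (!(p.all fun y => decide (y = 0)) || decide (0 ≤ x))

/-- The update of the data `cs` of `feasible` after `x` is put next to the row prefix `p`. -/
def update (cs : List (ℤ × ℤ)) (p : List ℤ) (x : ℤ) : List (ℤ × ℤ) :=
  List.zipWith (fun c y => (c.1 - x * y, c.2 - y * y)) cs p

/-- All candidates for (the rest of) the next column, given the prefixes of the remaining rows, the
row above together with its new entry, and the data of `feasible`. -/
def columns : List (List ℤ) → List ℤ × ℤ → ℤ → List (ℤ × ℤ) → List (List ℤ)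
  | [], _, left, _ => if left = 0 then [[]] else []
  | p :: ps, prev, left, cs =>
    (([-2, -1, 0, 1, 2] : List ℤ).filter (admissible p prev left)).flatMap fun x =>
      if feasible (left - x * x) (update cs p x) then
        (columns ps (p, x) (left - x * x) (update cs p x)).map (x :: ·)
      else []

/-- The order in which the columns are determined: it starts with short vectors that are
connected to each other, which keeps the number of partial matrices small. -/
def colOrder (j : ℕ) : Fin 9 := ([4, 8, 1, 0, 2, 6, 3, 5, 7] : List (Fin 9)).getD j 0

/-- The entries of `G₂`, with the columns reordered by `colOrder`. -/
def gramEntry (a b : ℕ) : ℤ := G₂ (colOrder a) (colOrder b)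

/-- `search n k rows` is `true` if the partial matrix with `k` columns whose rows are `rows` has no
normalized extension by `n` further columns. -/
def search : ℕ → ℕ → List (List ℤ) → Bool
  | 0, _, _ => false
  | n + 1, k, rows =>
    -- The row above the first one is fictitious: its new entry `2` imposes no condition.
    (columns rows ([], 2) (gramEntry k k)
        ((List.range k).map fun j => (gramEntry k j, gramEntry j j))).all
      fun xs => search n (k + 1) (List.zipWith (fun p x => p ++ [x]) rows xs)

/-! ### The search misses no normalized factorization -/

/-- The first `k` entries of `v`. -/
def pre (k : ℕ) (v : ℕ → ℤ) : List ℤ := (List.range k).map v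

/-- The inner product of columns `a` and `b` of the matrix with list of rows `R`. -/
def dot (R : List (ℕ → ℤ)) (a b : ℕ) : ℤ := (R.map fun v => v a * v b).sum

@[simp] lemma dot_nil (a b : ℕ) : dot [] a b = 0 := rfl

@[simp] lemma dot_cons (v : ℕ → ℤ) (R : List (ℕ → ℤ)) (a b : ℕ) :
    dot (v :: R) a b = v a * v b + dot R a b := by simp [dot]

lemma dot_self_nonneg (R : List (ℕ → ℤ)) (a : ℕ) : 0 ≤ dot R a a := by
  induction R with
  | nil => simp
  | cons v R ih => rw [dot_cons]; nlinarith [mul_self_nonneg (v a)]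

lemma dot_cauchy_schwarz (R : List (ℕ → ℤ)) (a b : ℕ) :
    dot R a b * dot R a b ≤ dot R a a * dot R b b := by
  have key : ∀ s t : ℤ,
      0 ≤ s * s * dot R a a + 2 * (s * t) * dot R a b + t * t * dot R b b := by
    intro s t
    induction R with
    | nil => simp
    | cons v R ih =>
      simp only [dot_cons]
      nlinarith [mul_self_nonneg (s * v a + t * v b)]
  have ha := dot_self_nonneg R a
  have h1 := key (dot R a b) (-dot R a a)
  rcases ha.eq_or_lt with h0 | h0
  · -- If column `a` vanishes, a large multiple of it rules out a nonzero inner product.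
    have h2 := key (-dot R a b * (dot R b b + 1)) 1
    have h3 := dot_self_nonneg R b
    rw [← h0] at h2 ⊢
    nlinarith [mul_self_nonneg (dot R a b), mul_nonneg (mul_self_nonneg (dot R a b)) h3]
  · have : 0 ≤ dot R a a * (dot R a a * dot R b b - dot R a b * dot R a b) := by linarith
    linarith [nonneg_of_mul_nonneg_right this h0]

/-- The condition on the entries in column `k` of two consecutive rows `u`, `v` of a normalized
matrix. For all `k` together it says that `v` is lexicographically at most `u`. -/
def Desc (k : ℕ) (u v : ℕ → ℤ) : Prop := pre k v = pre k u → v k ≤ u k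

/-- The sign condition on entry `k` of a row of a normalized matrix. For all `k` together it says
that the first nonzero entry, if any, is positive. -/
def Pos (k : ℕ) (v : ℕ → ℤ) : Prop := (∀ y ∈ pre k v, y = 0) → 0 ≤ v k

/-- The data of `feasible` for column `k` against the earlier columns. -/
def colData (k : ℕ) (R : List (ℕ → ℤ)) : List (ℤ × ℤ) :=
  (List.range k).map fun j => (dot R k j, dot R j j)

lemma update_colData (k : ℕ) (v : ℕ → ℤ) (R : List (ℕ → ℤ)) :
    update (colData k (v :: R)) (pre k v) (v k) = colData k R := by
  apply List.ext_getElem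
  · simp [update, colData, pre]
  · intro i h1 h2
    simp [update, colData, pre]

lemma feasible_colData (k : ℕ) (R : List (ℕ → ℤ)) : feasible (dot R k k) (colData k R) = true := by
  simp only [feasible, colData, List.all_eq_true, List.mem_map, decide_eq_true_eq]
  rintro _ ⟨j, -, rfl⟩
  exact dot_cauchy_schwarz R k j

/-- The actual column `k` of a normalized matrix is among the candidates. The row above the
first row of `R` enters through `prev`, since `R` runs through the tails of the list of rows. -/
lemma mem_columns (k : ℕ) (R : List (ℕ → ℤ)) (prev : List ℤ × ℤ)
    (hsmall : dot R k k < 9) (hpos : ∀ v ∈ R, Pos k v) (hchain : R.IsChain (Desc k))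
    (hprev : ∀ v ∈ R.head?, pre k v = prev.1 → v k ≤ prev.2) :
    R.map (· k) ∈ columns (R.map (pre k)) prev (dot R k k) (colData k R) := by
  induction R generalizing prev with
  | nil => simp [columns]
  | cons v R ih =>
    have hnn := dot_self_nonneg R k
    have hd : dot (v :: R) k k - v k * v k = dot R k k := by rw [dot_cons]; ring
    simp only [List.map_cons, columns, List.mem_flatMap, List.mem_filter]
    refine ⟨v k, ⟨?_, ?_⟩, ?_⟩
    · have h1 : v k < 3 := by nlinarith
      have h2 : -3 < v k := by nlinarith
      simp only [List.mem_cons, List.not_mem_nil, or_false]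
      omega
    · have h1 : pre k v = prev.1 → v k ≤ prev.2 := hprev v (by simp)
      have h2 : Pos k v := hpos v (by simp)
      have h3 : v k * v k ≤ dot (v :: R) k k := by linarith
      unfold Pos at h2
      simp only [admissible, Bool.and_eq_true, Bool.or_eq_true, Bool.not_eq_true',
        decide_eq_true_eq, ← Bool.not_eq_true, List.all_eq_true]
      exact ⟨⟨h3, not_or_of_imp h1⟩, not_or_of_imp h2⟩
    · rw [hd, update_colData, if_pos (feasible_colData k R)]
      refine List.mem_map_of_mem (ih _ ?_ ?_ hchain.tail ?_)
      · nlinarith [mul_self_nonneg (v k)]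
      · exact fun w hw => hpos w (by simp [hw])
      · intro w hw
        cases R with
        | nil => simp at hw
        | cons w' R =>
          obtain rfl : w' = w := by simpa using hw
          exact (List.isChain_cons_cons.mp hchain).1

lemma pre_succ (k : ℕ) (v : ℕ → ℤ) : pre (k + 1) v = pre k v ++ [v k] := by
  simp [pre, List.range_succ]

lemma gram_self_lt (k : ℕ) : gramEntry k k < 9 := by
  have h : ∀ i : Fin 9, G₂ i i < 9 := by decide
  exact h _

/-- If a normalized factorization exists, the search started from its first `k` columns does not
report failure. -/
lemma search_eq_false (R : List (ℕ → ℤ)) (hdot : ∀ a b, dot R a b = gramEntry a b)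
    (hpos : ∀ k, ∀ v ∈ R, Pos k v) (hchain : ∀ k, R.IsChain (Desc k)) (n k : ℕ) :
    search n k (R.map (pre k)) = false := by
  induction n generalizing k with
  | zero => rfl
  | succ n ih =>
    have hk := gram_self_lt k
    have hmem := mem_columns k R ([], 2) (by rw [hdot]; exact hk) (hpos k) (hchain k) (by
      intro v hv _
      have hle : v k * v k ≤ dot R k k := by
        cases R with
        | nil => simp at hv
        | cons w R =>
          obtain rfl : w = v := by simpa using hv
          rw [dot_cons]; linarith [dot_self_nonneg R k]
      rw [hdot] at hle
      change v k ≤ 2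
      nlinarith)
    simp only [colData, hdot] at hmem
    rw [search, List.all_eq_false]
    refine ⟨_, hmem, ?_⟩
    have hz : List.zipWith (fun p x => p ++ [x]) (R.map (pre k)) (R.map (· k))
        = R.map (pre (k + 1)) := by
      simp [List.zipWith_map, List.zipWith_self, pre_succ]
    rw [hz, ih]
    simp

/-! ### Normalization -/

lemma pre_eq_iff {k : ℕ} {u v : ℕ → ℤ} : pre k u = pre k v ↔ ∀ j < k, u j = v j := by
  simp [pre]

/-- The lexicographic order on rows implies the condition `Desc` for every length of prefix. -/
lemma desc_of_toLex_le {u v : ℕ → ℤ} (h : toLex v ≤ toLex u) (k : ℕ) : Desc k u v := by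
  intro hp
  rw [pre_eq_iff] at hp
  rcases h.eq_or_lt with h | ⟨i, hi, hlt⟩
  · exact (congrFun (toLex.injective h) k).le
  · have hi : ∀ j < i, v j = u j := hi
    have hlt : v i < u i := hlt
    rcases lt_trichotomy i k with hik | rfl | hik
    · exact absurd (hp i hik) hlt.ne
    · exact hlt.le
    · exact (hi k hik).le

lemma pos_of_toLex_neg_le {v : ℕ → ℤ} (h : toLex (-v) ≤ toLex v) (k : ℕ) : Pos k v := by
  intro h0
  have hz : ∀ j < k, v j = 0 := fun j hj => h0 _ (List.mem_map.2 ⟨j, List.mem_range.2 hj, rfl⟩)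
  have := desc_of_toLex_le h k (pre_eq_iff.2 fun j hj => by simp [hz j hj])
  simp only [Pi.neg_apply] at this
  omega

/-- The sign normalization of a row: the lexicographically larger of `v` and `-v`. -/
noncomputable def normSign (v : ℕ → ℤ) : ℕ → ℤ := if toLex (-v) ≤ toLex v then v else -v

lemma toLex_neg_normSign_le (v : ℕ → ℤ) : toLex (-normSign v) ≤ toLex (normSign v) := by
  unfold normSign
  split_ifs with h
  · exact h
  · rw [neg_neg]; exact (not_le.mp h).le

lemma normSign_mul (v : ℕ → ℤ) (a b : ℕ) : normSign v a * normSign v b = v a * v b := by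
  unfold normSign
  split_ifs <;> simp

/-- Changing signs and sorting turns any list of rows into a normalized one with the same Gram
matrix. -/
lemma exists_normalized (R : List (ℕ → ℤ)) : ∃ S : List (ℕ → ℤ), S.length = R.length ∧
    (∀ a b, dot S a b = dot R a b) ∧ (∀ k, ∀ v ∈ S, Pos k v) ∧ ∀ k, S.IsChain (Desc k) := by
  have hperm := List.mergeSort_perm (R.map normSign) fun u v => decide (toLex v ≤ toLex u)
  refine ⟨_, hperm.length_eq.trans (by simp), fun a b => ?_, fun k v hv => ?_, fun k => ?_⟩
  · rw [dot, (hperm.map _).sum_eq, List.map_map, dot]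
    congr 2
    funext v
    exact normSign_mul v a b
  · obtain ⟨w, -, rfl⟩ := List.mem_map.1 (hperm.mem_iff.1 hv)
    exact pos_of_toLex_neg_le (toLex_neg_normSign_le w) k
  · refine (List.Pairwise.imp ?_ (List.pairwise_mergeSort ?_ ?_ _)).isChain
    · intro u v h
      exact desc_of_toLex_le (of_decide_eq_true h) k
    · intro u v w h1 h2
      exact decide_eq_true ((of_decide_eq_true h2).trans (of_decide_eq_true h1))
    · intro u v
      simpa using le_total (toLex v) (toLex u)

end Goeritz

open Goeritz in
theorem G₂_no_factorization :
    ¬ ∃ M : Matrix (Fin 13) (Fin 9) ℤ, Mᵀ * M = G₂ := by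
  rintro ⟨M, hM⟩
  obtain ⟨S, hlen, hdot, hpos, hchain⟩ :=
    exists_normalized (List.ofFn fun i j => M i (colOrder j))
  have hgram : ∀ a b, dot S a b = gramEntry a b := by
    intro a b
    rw [hdot, gramEntry, ← hM, dot, List.map_ofFn, List.sum_ofFn]
    simp [Matrix.mul_apply]
  have hfalse := search_eq_false S hgram hpos hchain 9 0
  -- Prefixes of length `0` carry no information, so the search starts from 13 empty rows.
  have hstart : S.map (pre 0) = List.replicate 13 [] := by
    rw [List.length_ofFn] at hlen
    rw [← hlen]
    exact List.map_const' ..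
  have htrue : search 9 0 (List.replicate 13 []) = true := by decide +kernel
  rw [hstart, htrue] at hfalse
  exact Bool.noConfusion hfalse
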